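/- Write m = t(d+1) + α with t ≥ 1 and 0 ≤ α ≤ d, and let 1 ≤ l < t. Let σ ⊆ B be a simplex in M satisfying property P_l (with associated subscripts i_r = 1 + (r−1)(d+1) and j_r = j_1 + (r−1)(d+1)). Then σ ∉ 𝒮_{b_i} for all i ∈ {1,…,i_{l+1}} (where i_{l+1} = 1 + l(d+1)) if and only if: (1) b_{i_{l+1}} ∈ σ; (2) σ \ {b_{i_{l+1}}} ∉ M; and (3) b_s ∉ σ for every s ∈ {1,…,m} \ {i_{l+1}} with j_l < s < j_{l+1}. -/

import Mathlib

open Finset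

/-- The graph `G_m^d` on vertex set `Fin m ⊕ Fin m` (0-based indexing):
`Sum.inl i` is the vertex `a_{i+1}` and `Sum.inr j` is the vertex `b_{j+1}` of the paper;
`a_i` is adjacent to `b_j` iff `(j - i) mod m ∈ {0, …, d-1}`. -/
def Gmd (m d : ℕ) : SimpleGraph (Fin m ⊕ Fin m) :=
  SimpleGraph.fromRel (fun u v =>
    ∃ i j : Fin m, u = Sum.inl i ∧ v = Sum.inr j ∧ (j.val + m - i.val) % m < d)

/-- A finite set of vertices is independent iff no two of its elements are adjacent. -/
def IsInd (m d : ℕ) (σ : Finset (Fin m ⊕ Fin m)) : Prop :=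
  ∀ u ∈ σ, ∀ v ∈ σ, ¬ (Gmd m d).Adj u v

/-- The face poset `P` of the independence complex `Ind (G_m^d)` (ordered by `⊆`),
including the empty simplex. -/
def faceP (m d : ℕ) : Set (Finset (Fin m ⊕ Fin m)) := {σ | IsInd m d σ}

/-- One step of the matching construction: `S_x(T) = {σ ∈ T | x ∉ σ, σ ∪ {x} ∈ T}`. -/
def stepS {α : Type*} [DecidableEq α] (x : α) (T : Set (Finset α)) : Set (Finset α) :=
  {σ | σ ∈ T ∧ x ∉ σ ∧ insert x σ ∈ T}

/-- The survivors of one step: `T \ (S_x(T) ∪ μ_x(S_x(T)))`. -/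
def stepSurv {α : Type*} [DecidableEq α] (x : α) (T : Set (Finset α)) : Set (Finset α) :=
  T \ (stepS x T ∪ (insert x) '' (stepS x T))

/-- Iterating the matching construction along a list of vertices. -/
def phase {α : Type*} [DecidableEq α] (T : Set (Finset α)) (l : List α) : Set (Finset α) :=
  l.foldl (fun T x => stepSurv x T) T

/-- The list `a_1, …, a_m`. -/
def listA (m : ℕ) : List (Fin m ⊕ Fin m) := (List.finRange m).map Sum.inl
/-- The list `b_1, …, b_m`. -/
def listB (m : ℕ) : List (Fin m ⊕ Fin m) := (List.finRange m).map Sum.inr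

/-- `S_{a_{i+1}}` (0-based `i`): the set matched with `a_{i+1}` at stage `i+1` of phase one. -/
def Sa (m d : ℕ) (i : Fin m) : Set (Finset (Fin m ⊕ Fin m)) :=
  stepS (Sum.inl i) (phase (faceP m d) ((listA m).take i.val))

/-- `M = P \ (S_1 ∪ μ_1(S_1))`, the simplices surviving phase one. -/
def setM (m d : ℕ) : Set (Finset (Fin m ⊕ Fin m)) := phase (faceP m d) (listA m)

/-- `S_{b_{i+1}}` (0-based `i`): the set matched with `b_{i+1}` at stage `i+1` of phase two. -/
def Sb (m d : ℕ) (i : Fin m) : Set (Finset (Fin m ⊕ Fin m)) :=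
  stepS (Sum.inr i) (phase (setM m d) ((listB m).take i.val))

/-- `𝒮_{a_{i+1}} = S_{a_{i+1}} ∪ μ_{a_{i+1}}(S_{a_{i+1}})`. -/
def scriptSa (m d : ℕ) (i : Fin m) : Set (Finset (Fin m ⊕ Fin m)) :=
  Sa m d i ∪ (insert (Sum.inl i)) '' (Sa m d i)

/-- `𝒮_{b_{i+1}} = S_{b_{i+1}} ∪ μ_{b_{i+1}}(S_{b_{i+1}})`. -/
def scriptSb (m d : ℕ) (i : Fin m) : Set (Finset (Fin m ⊕ Fin m)) :=
  Sb m d i ∪ (insert (Sum.inr i)) '' (Sb m d i)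

/-- The critical cells `C = P \ (S ∪ μ(S))`. -/
def setC (m d : ℕ) : Set (Finset (Fin m ⊕ Fin m)) :=
  faceP m d \ ((⋃ i : Fin m, scriptSa m d i) ∪ (⋃ i : Fin m, scriptSb m d i))

/-- The matching relation: `MatchRel σ τ` iff `τ = μ(σ)` for `σ ∈ S = S_1 ∪ S_2`. -/
def MatchRel (m d : ℕ) (σ τ : Finset (Fin m ⊕ Fin m)) : Prop :=
  (∃ i : Fin m, σ ∈ Sa m d i ∧ τ = insert (Sum.inl i) σ) ∨
  (∃ i : Fin m, σ ∈ Sb m d i ∧ τ = insert (Sum.inr i) σ)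

/-- `B_{s+1} = {b_{s+1}, b_{s+2}, …, b_{s+m-d}}` (0-based `s`, subscripts mod `m`). -/
def Bset (m d : ℕ) (s : Fin m) : Finset (Fin m ⊕ Fin m) :=
  (Finset.univ.filter (fun j : Fin m => (j.val + m - s.val) % m < m - d)).image Sum.inr

/-- `b_{n+1} ∈ σ` (0-based subscript `n`). -/
def hasB (m : ℕ) (σ : Finset (Fin m ⊕ Fin m)) (n : ℕ) : Prop :=
  ∃ j : Fin m, j.val = n ∧ Sum.inr j ∈ σ

/-- `σ ⊆ B`. -/
def onlyB (m : ℕ) (σ : Finset (Fin m ⊕ Fin m)) : Prop :=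
  ∀ v ∈ σ, ∃ j : Fin m, v = Sum.inr j

/-- Property `P_l` of the paper, with parameter `j1` (0-based: the paper's `j_1 - 1`, so
`1 ≤ j1 ≤ d`).  With 0-based subscripts `i_r = (r-1)(d+1)`, `j_r = j1 + (r-1)(d+1)` and
`k = m + j1 - (d+1)`:  σ ∈ M, σ ⊆ B, the `2l` smallest subscripts of σ are exactly
`0 = i_1, j_1, i_2, j_2, …, i_l, j_l`, the largest subscript is `k`, and
`σ \ {b_{i_r}} ∉ M`, `σ \ {b_{j_r}} ∉ M` for all `1 ≤ r ≤ l`. -/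
def propP (m d l j1 : ℕ) (σ : Finset (Fin m ⊕ Fin m)) : Prop :=
  σ ∈ setM m d ∧ onlyB m σ ∧ 1 ≤ j1 ∧ j1 ≤ d ∧
  (∀ r, 1 ≤ r → r ≤ l → hasB m σ ((r-1)*(d+1)) ∧ hasB m σ (j1 + (r-1)*(d+1))) ∧
  (∀ j : Fin m, Sum.inr j ∈ σ → j.val ≤ j1 + (l-1)*(d+1) →
      ∃ r, 1 ≤ r ∧ r ≤ l ∧ (j.val = (r-1)*(d+1) ∨ j.val = j1 + (r-1)*(d+1))) ∧
  hasB m σ (m + j1 - (d+1)) ∧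
  (∀ j : Fin m, Sum.inr j ∈ σ → j.val ≤ m + j1 - (d+1)) ∧
  (∀ r, 1 ≤ r → r ≤ l → ∀ j : Fin m,
      (j.val = (r-1)*(d+1) ∨ j.val = j1 + (r-1)*(d+1)) → σ.erase (Sum.inr j) ∉ setM m d)

/-!
Unroll the subscripts of the `b`'s in `σ` to an `m`-periodic set of integers. Matching with the
independent vertices `a_i` leaves exactly the sets of `b`'s that dominate every `a_i`, so `M`
consists of the sets whose periodic support meets every window of `d` consecutive integers. `M` is
closed under inserting `b`'s, so a survivor of the earlier steps escapes being matched with `b_p`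
exactly when `σ \ {b_p}` has already left the process.

The positions `i_r` and `j_r` form a set with two points in each period `d + 1`. If `σ` agrees with
it up to such a position `p`, let `p'` be the next one, so that the previous one is `p' - (d + 1)`.
Removing `b_p` leads out of `M` exactly when the window strictly between `p' - (d + 1)` and `p'`
contains no subscript other than `p`, that is, when the agreement extends up to `p'`. By induction
the survivors of `b_1, …, b_p` with the prescribed largest subscript are the `σ ∈ M` that agree with
the canonical positions up to `p'`. Under `P_l` with `p = i_{l+1}`, that agreement is what
conditions (1) and (3) express, and (2) is the escape criterion at `p`.
-/

/-! ### The element matching -/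

section Matching

variable {α : Type*} [DecidableEq α] {x : α} {T K : Set (Finset α)} {σ : Finset α}

theorem mem_stepSurv_iff :
    σ ∈ stepSurv x T ↔ σ ∈ T ∧ ¬ (insert x σ ∈ T ∧ σ.erase x ∈ T) := by
  simp only [stepSurv, stepS, Set.mem_sdiff, Set.mem_union, Set.mem_ofPred_eq, Set.mem_image]
  refine and_congr_right fun hσ => not_congr ⟨?_, ?_⟩
  · rintro (⟨-, hx, hins⟩ | ⟨τ, ⟨hτ, hx, hins⟩, rfl⟩)
    · exact ⟨hins, by rwa [erase_eq_of_notMem hx]⟩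
    · exact ⟨(insert_idem x τ).symm ▸ hins, (erase_insert hx).symm ▸ hτ⟩
  · rintro ⟨hins, hera⟩
    by_cases hx : x ∈ σ
    · exact Or.inr ⟨σ.erase x, ⟨hera, notMem_erase x σ, by rwa [insert_erase hx]⟩, insert_erase hx⟩
    · exact Or.inl ⟨hσ, hx, hins⟩

theorem stepSurv_eq_self (h : ∀ σ ∈ T, x ∉ σ) : stepSurv x T = T :=
  Set.ext fun _ => mem_stepSurv_iff.trans <|
    and_iff_left fun hins => h _ hins.1 (mem_insert_self x _)

theorem erase_mem_iff_of_insert_mem_iff (h : ∀ σ, insert x σ ∈ K ↔ σ ∈ K) :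
    σ.erase x ∈ K ↔ σ ∈ K := by
  rw [← h, ← h σ, show insert x (σ.erase x) = insert x σ by grind]

theorem stepSurv_inter (h : ∀ σ, insert x σ ∈ K ↔ σ ∈ K) :
    stepSurv x (T ∩ K) = stepSurv x T ∩ K := by
  ext σ
  simp only [mem_stepSurv_iff, Set.mem_inter_iff, h, erase_mem_iff_of_insert_mem_iff h]
  tauto

theorem phase_append_singleton (T : Set (Finset α)) (l : List α) (x : α) :
    phase T (l ++ [x]) = stepSurv x (phase T l) :=
  List.foldl_append

theorem phase_inter {l : List α} (h : ∀ x ∈ l, ∀ σ, insert x σ ∈ K ↔ σ ∈ K) :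
    phase (T ∩ K) l = phase T l ∩ K := by
  induction l using List.reverseRecOn with
  | nil => rfl
  | append_singleton l x ih =>
    rw [phase_append_singleton, phase_append_singleton, ih fun y hy => h y (by simp [hy]),
      stepSurv_inter (h x (by simp))]

theorem mem_phase_isIndepSet_iff (G : SimpleGraph α) {l : List α}
    (hl : ∀ x ∈ l, ∀ y ∈ l, ¬ G.Adj x y) :
    σ ∈ phase {τ : Finset α | G.IsIndepSet τ} l ↔
      G.IsIndepSet σ ∧ ∀ x ∈ l, ∃ v ∈ σ, G.Adj x v := by
  induction l using List.reverseRecOn generalizing σ with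
  | nil => simp [phase]
  | append_singleton l x ih =>
    have hx : x ∈ l ++ [x] := by simp
    have hmem : ∀ {y}, y ∈ l → y ∈ l ++ [x] := List.mem_append_left _
    have ih {τ : Finset α} := ih (σ := τ) fun y hy z hz => hl y (hmem hy) z (hmem hz)
    have matched_iff (hσ : G.IsIndepSet σ) (hdom : ∀ y ∈ l, ∃ v ∈ σ, G.Adj y v) :
        insert x σ ∈ phase {τ : Finset α | G.IsIndepSet τ} l ∧
          σ.erase x ∈ phase {τ : Finset α | G.IsIndepSet τ} l ↔ ∀ v ∈ σ, ¬ G.Adj x v := by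
      rw [ih, ih]
      constructor
      · rintro ⟨⟨hins, -⟩, -⟩ v hv hadj
        exact hins (by simp) (by simp [hv]) hadj.ne hadj
      · intro hfree
        refine ⟨⟨?_, fun y hy => ?_⟩, hσ.mono (by simp), fun y hy => ?_⟩
        · rw [coe_insert]
          exact hσ.insert fun v hv _ => ⟨hfree v hv, fun hadj => hfree v hv hadj.symm⟩
        · obtain ⟨v, hv, hadj⟩ := hdom y hy
          exact ⟨v, mem_insert_of_mem hv, hadj⟩
        · obtain ⟨v, hv, hadj⟩ := hdom y hy
          exact ⟨v, mem_erase.2 ⟨fun hvx => hl y (hmem hy) x hx (hvx ▸ hadj), hv⟩, hadj⟩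
    rw [phase_append_singleton, mem_stepSurv_iff, ih, List.forall_mem_append,
      List.forall_mem_singleton, and_assoc]
    refine and_congr_right fun hσ => and_congr_right fun hdom => ?_
    rw [matched_iff hσ hdom]
    push Not
    rfl

end Matching

/-! ### Periodic supports and the set `M` -/

theorem eq_of_modEq_of_abs_sub_lt {a b n : ℤ} (h : a ≡ b [ZMOD n]) (hlt : |b - a| < n) :
    a = b :=
  (sub_eq_zero.1 (Int.eq_zero_of_abs_lt_dvd h.dvd hlt)).symm

/-- The integers `z` such that the vertex `b_{z+1}`, with subscript read modulo `m`, belongs to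
`σ`. Unrolling the cyclic order turns the cyclic windows of neighbours into intervals of `ℤ`. -/
def periodicSupport {m : ℕ} (σ : Finset (Fin m ⊕ Fin m)) : Set ℤ :=
  {z | ∃ j : Fin m, Sum.inr j ∈ σ ∧ z ≡ j [ZMOD m]}

section PeriodicSupport

variable {m d : ℕ} {σ : Finset (Fin m ⊕ Fin m)} {p : Fin m} {y z q : ℤ}

theorem mem_periodicSupport_congr (h : y ≡ z [ZMOD m]) :
    y ∈ periodicSupport σ ↔ z ∈ periodicSupport σ :=
  exists_congr fun _ => and_congr_right fun _ => ⟨h.symm.trans, h.trans⟩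

theorem fin_eq_of_intCast_modEq {i j : Fin m} (h : (i : ℤ) ≡ j [ZMOD m]) : i = j := by
  have := eq_of_modEq_of_abs_sub_lt h (by rw [abs_lt]; omega)
  omega

theorem coe_mem_periodicSupport : (p : ℤ) ∈ periodicSupport σ ↔ Sum.inr p ∈ σ :=
  ⟨fun ⟨_, hj, h⟩ => fin_eq_of_intCast_modEq h ▸ hj, fun h => ⟨p, h, rfl⟩⟩

theorem exists_eq_of_mem_periodicSupport (hz : z ∈ periodicSupport σ) (hz0 : 0 ≤ z) (hzm : z < m) :
    ∃ j : Fin m, z = j ∧ Sum.inr j ∈ σ := by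
  obtain ⟨j, hj, h⟩ := hz
  exact ⟨j, eq_of_modEq_of_abs_sub_lt h (by rw [abs_lt]; omega), hj⟩

theorem hasB_iff_mem_periodicSupport {n : ℕ} (hn : n < m) :
    hasB m σ n ↔ (n : ℤ) ∈ periodicSupport σ := by
  constructor
  · rintro ⟨j, rfl, hj⟩
    exact coe_mem_periodicSupport.2 hj
  · intro h
    obtain ⟨j, hnj, hj⟩ := exists_eq_of_mem_periodicSupport h (by omega) (by omega)
    exact ⟨j, by omega, hj⟩

theorem mem_periodicSupport_insert :
    z ∈ periodicSupport (insert (Sum.inr p) σ) ↔ z ≡ p [ZMOD m] ∨ z ∈ periodicSupport σ := by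
  simp only [periodicSupport, Set.mem_ofPred_eq, mem_insert, Sum.inr.injEq, or_and_right,
    exists_or, exists_eq_left]

theorem mem_periodicSupport_erase :
    z ∈ periodicSupport (σ.erase (Sum.inr p)) ↔
      ¬ z ≡ p [ZMOD m] ∧ z ∈ periodicSupport σ := by
  constructor
  · rintro ⟨j, hj, hz⟩
    rw [mem_erase, ne_eq, Sum.inr.injEq] at hj
    exact ⟨fun hp => hj.1 (fin_eq_of_intCast_modEq (hz.symm.trans hp)), j, hj.2, hz⟩
  · rintro ⟨hp, j, hj, hz⟩
    exact ⟨j, mem_erase.2 ⟨fun hjp => hp (Sum.inr_injective hjp ▸ hz), hj⟩, hz⟩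

theorem faceP_eq_setOf_isIndepSet :
    faceP m d = {σ : Finset (Fin m ⊕ Fin m) | (Gmd m d).IsIndepSet σ} :=
  Set.ext fun _ => ⟨fun h _ hu _ hv _ => h _ hu _ hv,
    fun h _ hu _ hv hadj => h hu hv hadj.ne hadj⟩

theorem Gmd_adj_inl_iff {i : Fin m} {v : Fin m ⊕ Fin m} :
    (Gmd m d).Adj (Sum.inl i) v ↔ ∃ j : Fin m, v = Sum.inr j ∧ (j.val + m - i.val) % m < d := by
  rw [Gmd, SimpleGraph.fromRel_adj]
  constructor
  · rintro ⟨-, ⟨_, j, hi, rfl, h⟩ | ⟨_, _, _, hi, _⟩⟩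
    · exact ⟨j, rfl, Sum.inl_injective hi ▸ h⟩
    · cases hi
  · rintro ⟨j, rfl, h⟩
    exact ⟨Sum.inl_ne_inr, Or.inl ⟨i, j, rfl, rfl, h⟩⟩

theorem add_sub_mod_lt_iff {i j : Fin m} :
    (j.val + m - i.val) % m < d ↔ ∃ z : ℤ, z ≡ j [ZMOD m] ∧ i ≤ z ∧ z < i + d := by
  have hcast : (((j.val + m - i.val) % m : ℕ) : ℤ) = ((j : ℤ) + m - i) % m := by
    rw [Int.natCast_mod, Nat.cast_sub (by omega), Nat.cast_add]
  constructor
  · intro h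
    refine ⟨i + ((j.val + m - i.val) % m : ℕ), ?_, by omega, by omega⟩
    calc (i : ℤ) + ((j.val + m - i.val) % m : ℕ)
        ≡ i + (j + m - i) [ZMOD m] := by rw [hcast]; exact (Int.mod_modEq _ _).add_left _
      _ = j + m := by ring
      _ ≡ j [ZMOD m] := by simp
  · rintro ⟨z, hz, hiz, hzd⟩
    obtain ⟨n, hn⟩ := Int.eq_ofNat_of_zero_le (sub_nonneg.2 hiz)
    have hmod : ((j : ℤ) + m - i) % m = (n % m : ℕ) := by
      rw [add_sub_right_comm, Int.add_emod_right, Int.natCast_mod, ← hn]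
      exact (hz.symm.sub_right _).eq
    have hle := Nat.mod_le n m
    omega

theorem mem_setM_iff (hm : 0 < m) :
    σ ∈ setM m d ↔
      onlyB m σ ∧ ∀ i : ℤ, ∃ z ∈ periodicSupport σ, i ≤ z ∧ z < i + d := by
  have hA : ∀ x ∈ listA m, ∀ y ∈ listA m, ¬ (Gmd m d).Adj x y := by
    simp [listA, Gmd_adj_inl_iff]
  have hphase : σ ∈ setM m d ↔ (Gmd m d).IsIndepSet (σ : Set (Fin m ⊕ Fin m)) ∧
      ∀ i : Fin m, ∃ v ∈ σ, (Gmd m d).Adj (Sum.inl i) v := by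
    rw [setM, faceP_eq_setOf_isIndepSet, mem_phase_isIndepSet_iff _ hA]
    simp [listA]
  rw [hphase]
  constructor
  · rintro ⟨hind, hdom⟩
    refine ⟨?_, fun i => ?_⟩
    · rintro (i | j) hv
      · obtain ⟨v, hvσ, hadj⟩ := hdom i
        exact absurd hadj (hind hv hvσ hadj.ne)
      · exact ⟨j, rfl⟩
    · obtain ⟨i₀, hlt, hi₀⟩ := Int.existsUnique_equiv_nat i (b := m) (by omega)
      obtain ⟨v, hv, hadj⟩ := hdom ⟨i₀, by omega⟩
      obtain ⟨j, rfl, hj⟩ := Gmd_adj_inl_iff.1 hadj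
      obtain ⟨z, hz, hle, hzd⟩ := add_sub_mod_lt_iff.1 hj
      dsimp only at hle hzd
      refine ⟨z + (i - i₀), ⟨j, hv, ?_⟩, by omega, by omega⟩
      simpa using hz.add (hi₀.symm.sub_right (i₀ : ℤ))
  · rintro ⟨hB, hwin⟩
    refine ⟨fun u hu v hv _ hadj => ?_, fun i => ?_⟩
    · obtain ⟨i, rfl⟩ := hB u hu
      obtain ⟨j, rfl⟩ := hB v hv
      simp [Gmd] at hadj
    · obtain ⟨z, ⟨j, hj, hz⟩, hiz, hzd⟩ := hwin i
      exact ⟨_, hj, Gmd_adj_inl_iff.2 ⟨j, rfl, add_sub_mod_lt_iff.2 ⟨z, hz, hiz, hzd⟩⟩⟩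

theorem insert_inr_mem_setM (hσ : σ ∈ setM m d) (p : Fin m) : insert (Sum.inr p) σ ∈ setM m d := by
  have hm : 0 < m := p.pos
  obtain ⟨hB, hwin⟩ := (mem_setM_iff hm).1 hσ
  refine (mem_setM_iff hm).2 ⟨?_, fun i => ?_⟩
  · simpa [onlyB] using hB
  · obtain ⟨z, hz, hiz⟩ := hwin i
    exact ⟨z, mem_periodicSupport_insert.2 (Or.inr hz), hiz⟩

theorem erase_inr_notMem_setM_iff (hdm : d < m) (hσ : σ ∈ setM m d)
    (hq : q ∈ periodicSupport σ) (hqp : q < p) (hpred : ∀ y ∈ periodicSupport σ, q < y → p ≤ y) :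
    σ.erase (Sum.inr p) ∉ setM m d ↔
      ∀ y ∈ periodicSupport σ, q < y → y ≤ q + d → y = p := by
  have hm : 0 < m := p.pos
  obtain ⟨hB, hwin⟩ := (mem_setM_iff hm).1 hσ
  constructor
  · intro hera y hy hqy hyd
    by_contra hyp
    refine hera ((mem_setM_iff hm).2 ⟨fun v hv => hB v (mem_of_mem_erase hv), fun i => ?_⟩)
    have survives {x : ℤ} (hx : x ∈ periodicSupport σ) (hne : x ≠ p) (hlt : |p - x| < m) :
        x ∈ periodicSupport (σ.erase (Sum.inr p)) :=
      mem_periodicSupport_erase.2 ⟨fun h => hne (eq_of_modEq_of_abs_sub_lt h hlt), hx⟩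
    obtain ⟨z, hz, hiz, hzd⟩ := hwin i
    by_cases hzp : z ≡ p [ZMOD m]
    · -- Shifting by `z - p` moves the window onto `p`; it then also contains `q` or `y`.
      have shift {x : ℤ} (hx : x ∈ periodicSupport (σ.erase (Sum.inr p))) :
          x + (z - p) ∈ periodicSupport (σ.erase (Sum.inr p)) :=
        (mem_periodicSupport_congr (by simpa using (hzp.sub_right p).add_left x)).2 hx
      have hpy := hpred y hy hqy
      rcases le_or_gt (i - (z - p)) q with hi | hi
      · exact ⟨q + (z - p), shift (survives hq hqp.ne (by rw [abs_lt]; omega)), by omega, by omega⟩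
      · exact ⟨y + (z - p), shift (survives hy hyp (by rw [abs_lt]; omega)), by omega, by omega⟩
    · exact ⟨z, mem_periodicSupport_erase.2 ⟨hzp, hz⟩, hiz, hzd⟩
  · intro honly hera
    obtain ⟨z, hz, hqz, hzd⟩ := ((mem_setM_iff hm).1 hera).2 (q + 1)
    obtain ⟨hzp, hz⟩ := mem_periodicSupport_erase.1 hz
    exact hzp (honly z hz (by omega) (by omega) ▸ rfl)

end PeriodicSupport

/-! ### Canonical positions -/

/-- The 0-based positions `…, i_r, j_r, i_{r+1}, j_{r+1}, …` of property `P_l`, continued to all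
`r ∈ ℤ`. -/
def canonicalSet (d j : ℕ) : Set ℤ :=
  {z | z ≡ 0 [ZMOD d + 1] ∨ z ≡ j [ZMOD d + 1]}

/-- `p'` is the canonical position following `p`. Each period `d + 1` contains two canonical
positions, so the one preceding `p` is `p' - (d + 1)`, and `p` is the only one in between. -/
structure IsNextCanonical (d j : ℕ) (p p' : ℤ) : Prop where
  mem : p ∈ canonicalSet d j
  mem_next : p' ∈ canonicalSet d j
  lt : p < p'
  sub_lt : p' - (d + 1) < p
  eq_of_mem : ∀ x ∈ canonicalSet d j, p' - (d + 1) < x → x < p' → x = p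

section Canonical

variable {m d j : ℕ} {p p' : ℤ} {σ : Finset (Fin m ⊕ Fin m)}

theorem isNextCanonical_of_forall_mem_iff {a b : ℤ}
    (hC : ∀ x, x ∈ canonicalSet d j ↔ x ≡ a [ZMOD d + 1] ∨ x ≡ b [ZMOD d + 1])
    (hp : p ≡ a [ZMOD d + 1]) (hp' : p' ≡ b [ZMOD d + 1]) (hlt : p < p')
    (hsub : p' - (d + 1) < p) : IsNextCanonical d j p p' where
  mem := (hC p).2 (Or.inl hp)
  mem_next := (hC p').2 (Or.inr hp')
  lt := hlt
  sub_lt := hsub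
  eq_of_mem x hx hlx hxu := by
    rcases (hC x).1 hx with hxa | hxb
    · exact eq_of_modEq_of_abs_sub_lt (hxa.trans hp.symm) (by rw [abs_lt]; omega)
    · have hshift : x ≡ p' - (d + 1) [ZMOD d + 1] := by simpa using hxb.trans hp'.symm
      have := eq_of_modEq_of_abs_sub_lt hshift (by rw [abs_lt]; omega)
      omega

theorem isNextCanonical_add (hj : 0 < j) (hjd : j ≤ d) (hp : p ≡ 0 [ZMOD d + 1]) :
    IsNextCanonical d j p (p + j) :=
  isNextCanonical_of_forall_mem_iff (fun _ => Iff.rfl) hp (by simpa using hp.add_right (j : ℤ))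
    (by omega) (by omega)

theorem exists_isNextCanonical (hj : 0 < j) (hjd : j ≤ d) (hp : p ∈ canonicalSet d j) :
    ∃ p', IsNextCanonical d j p p' := by
  rcases hp with hp | hp
  · exact ⟨p + j, isNextCanonical_add hj hjd hp⟩
  · refine ⟨p - j + (d + 1), isNextCanonical_of_forall_mem_iff (fun _ => or_comm) hp ?_ (by omega)
      (by omega)⟩
    simpa using hp.sub_right (j : ℤ)

theorem IsNextCanonical.sub_mem (h : IsNextCanonical d j p p') :
    p' - (d + 1) ∈ canonicalSet d j := by
  simpa [canonicalSet] using h.mem_next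

theorem IsNextCanonical.le_of_nonneg (h : IsNextCanonical d j p p') (hj : 0 < j) (hjd : j ≤ d)
    (hp : 0 ≤ p) : j ≤ p' := by
  have hzero : IsNextCanonical d j 0 (0 + j) := isNextCanonical_add hj hjd rfl
  have hlt := h.lt
  by_contra! hcon
  have := hzero.eq_of_mem p' h.mem_next (by omega) (by omega)
  omega

/-- The sets whose periodic support is canonical on `[j - (d + 1), N)`. The interval starts at
the canonical position preceding `0`, so that `N = 0` expresses that the largest subscript is
`m + j - (d + 1)`. -/
def agreeSet (m d j : ℕ) (N : ℤ) : Set (Finset (Fin m ⊕ Fin m)) :=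
  {σ | ∀ z : ℤ, j - (d + 1) ≤ z → z < N → (z ∈ periodicSupport σ ↔ z ∈ canonicalSet d j)}

theorem agreeSet_anti {N N' : ℤ} (h : N ≤ N') : agreeSet m d j N' ⊆ agreeSet m d j N :=
  fun _ hσ z hz hzN => hσ z hz (hzN.trans_le h)

theorem insert_inr_mem_agreeSet_iff {N : ℤ} {x : Fin m} (hN : N ≤ x)
    (hx : (x : ℤ) < m + j - (d + 1)) :
    insert (Sum.inr x) σ ∈ agreeSet m d j N ↔ σ ∈ agreeSet m d j N := by
  refine forall_congr' fun z => imp_congr_right fun hz => imp_congr_right fun hzN => ?_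
  have hne : ¬ z ≡ x [ZMOD m] := fun h => by
    have := eq_of_modEq_of_abs_sub_lt h (by rw [abs_lt]; omega)
    omega
  rw [mem_periodicSupport_insert, or_iff_right hne]

theorem mem_agreeSet_next_iff (h : IsNextCanonical d j p p') (hj : 0 < j) (hjd : j ≤ d)
    (hp : 0 ≤ p) (hσ : σ ∈ agreeSet m d j (p' - (d + 1) + 1)) :
    σ ∈ agreeSet m d j p' ↔ p ∈ periodicSupport σ ∧
      ∀ y ∈ periodicSupport σ, p' - (d + 1) < y → y < p' → y = p := by
  have hjp' := h.le_of_nonneg hj hjd hp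
  constructor
  · intro hσ'
    exact ⟨(hσ' p (by omega) h.lt).2 h.mem,
      fun y hy hly hyu => h.eq_of_mem y ((hσ' y (by omega) hyu).1 hy) hly hyu⟩
  · rintro ⟨hpσ, honly⟩ z hz hzp'
    rcases lt_or_ge (p' - (d + 1)) z with hlz | hzl
    · constructor
      · intro hzσ
        exact honly z hzσ hlz hzp' ▸ h.mem
      · intro hzC
        exact h.eq_of_mem z hzC hlz hzp' ▸ hpσ
    · exact hσ z hz (by omega)

theorem mem_agreeSet_next_iff_erase_notMem {p : Fin m} (h : IsNextCanonical d j p p') (hj : 0 < j)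
    (hjd : j ≤ d) (hp' : p' ≤ m + j - (d + 1)) (hM : σ ∈ setM m d) (hσ : σ ∈ agreeSet m d j p) :
    σ ∈ agreeSet m d j p' ↔ σ.erase (Sum.inr p) ∉ setM m d := by
  have hlt := h.sub_lt
  have hjp' := h.le_of_nonneg hj hjd (Int.natCast_nonneg p)
  have hq : p' - (d + 1) ∈ periodicSupport σ := (hσ _ (by omega) hlt).2 h.sub_mem
  have hpred : ∀ y ∈ periodicSupport σ, p' - (d + 1) < y → (p : ℤ) ≤ y := by
    intro y hy hly
    by_contra! hyp
    have := h.eq_of_mem y ((hσ y (by omega) hyp).1 hy) hly (hyp.trans h.lt)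
    omega
  rw [mem_agreeSet_next_iff h hj hjd (Int.natCast_nonneg p) (agreeSet_anti (by omega) hσ),
    erase_inr_notMem_setM_iff (by omega) hM hq hlt hpred]
  constructor
  · rintro ⟨-, honly⟩ y hy hly hyu
    exact honly y hy hly (by omega)
  · intro honly
    obtain ⟨z, hz, hlz, hzu⟩ := ((mem_setM_iff p.pos).1 hM).2 (p' - (d + 1) + 1)
    have hzp : z = p := honly z hz (by omega) (by omega)
    exact ⟨hzp ▸ hz, fun y hy hly hyu => honly y hy hly (by omega)⟩

theorem mem_agreeSet_next_iff_hasB {p p' q : ℕ} (h : IsNextCanonical d j p p') (hj : 0 < j)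
    (hjd : j ≤ d) (hq : p' = q + (d + 1)) (hp' : (p' : ℤ) ≤ m + j - (d + 1)) (hM : σ ∈ setM m d)
    (hσ : σ ∈ agreeSet m d j (q + 1)) :
    σ ∈ agreeSet m d j p' ↔ hasB m σ p ∧
      (∀ i : Fin m, i.val = p → σ.erase (Sum.inr i) ∉ setM m d) ∧
      ∀ s : Fin m, Sum.inr s ∈ σ → s.val ≠ p → ¬ (q < s.val ∧ s.val < p') := by
  have hlt := h.lt
  have hiff := mem_agreeSet_next_iff h hj hjd (Int.natCast_nonneg p)
    (agreeSet_anti (by omega) hσ)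
  rw [hasB_iff_mem_periodicSupport (by omega)]
  constructor
  · intro hσ'
    obtain ⟨hmem, honly⟩ := hiff.1 hσ'
    refine ⟨hmem, ?_, fun s hs hsp hwin => hsp ?_⟩
    · rintro i rfl
      exact (mem_agreeSet_next_iff_erase_notMem h hj hjd hp' hM (agreeSet_anti hlt.le hσ')).1 hσ'
    · exact_mod_cast honly s (coe_mem_periodicSupport.2 hs) (by omega) (by omega)
  · rintro ⟨hmem, -, honly⟩
    refine hiff.2 ⟨hmem, fun y hy hly hyu => ?_⟩
    obtain ⟨s, rfl, hs⟩ := exists_eq_of_mem_periodicSupport hy (by omega) (by omega)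
    by_contra hsp
    exact honly s hs (by omega) ⟨by omega, by omega⟩

/-! ### The matching on `M` -/

theorem stepSurv_setM_inter_agreeSet {p : Fin m} (h : IsNextCanonical d j p p') (hj : 0 < j)
    (hjd : j ≤ d) (hp' : p' ≤ m + j - (d + 1)) :
    stepSurv (Sum.inr p) (setM m d ∩ agreeSet m d j p) = setM m d ∩ agreeSet m d j p' := by
  have hlt := h.lt
  rw [stepSurv_inter fun _ => insert_inr_mem_agreeSet_iff le_rfl (by omega)]
  ext σ
  rw [Set.mem_inter_iff, Set.mem_inter_iff, mem_stepSurv_iff, and_assoc]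
  refine and_congr_right fun hM => ?_
  rw [and_iff_right (insert_inr_mem_setM hM p)]
  constructor
  · rintro ⟨hera, hσ⟩
    exact (mem_agreeSet_next_iff_erase_notMem h hj hjd hp' hM hσ).2 hera
  · intro hσ'
    have hσ := agreeSet_anti hlt.le hσ'
    exact ⟨(mem_agreeSet_next_iff_erase_notMem h hj hjd hp' hM hσ).1 hσ', hσ⟩

theorem phase_take_listB_succ (T : Set (Finset (Fin m ⊕ Fin m))) {n : ℕ} (hn : n < m) :
    phase T ((listB m).take (n + 1)) =
      stepSurv (Sum.inr ⟨n, hn⟩) (phase T ((listB m).take n)) := by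
  have htake : (listB m).take (n + 1) = (listB m).take n ++ [Sum.inr ⟨n, hn⟩] := by
    rw [List.take_succ_eq_append_getElem (by simpa [listB] using hn)]
    simp [listB]
  rw [htake, phase_append_singleton]

theorem mem_phase_take_listB_iff {n : ℕ} (hn : n ≤ m) :
    σ ∈ phase (setM m d) ((listB m).take n) ↔
      σ ∈ setM m d ∧ ∀ i : Fin m, i.val < n → σ ∉ scriptSb m d i := by
  induction n with
  | zero => simp [phase]
  | succ n ih =>
    have hstep : phase (setM m d) ((listB m).take (n + 1)) =
        phase (setM m d) ((listB m).take n) \ scriptSb m d ⟨n, hn⟩ :=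
      phase_take_listB_succ _ hn
    have hsplit : (∀ i : Fin m, i.val < n + 1 → σ ∉ scriptSb m d i) ↔
        (∀ i : Fin m, i.val < n → σ ∉ scriptSb m d i) ∧ σ ∉ scriptSb m d ⟨n, hn⟩ := by
      constructor
      · exact fun h => ⟨fun i hi => h i (by omega), h _ (Nat.lt_succ_self n)⟩
      · rintro ⟨hlt, heq⟩ i hi
        rcases Nat.lt_succ_iff_lt_or_eq.1 hi with hi | rfl
        exacts [hlt i hi, heq]
    rw [hstep, Set.mem_sdiff, ih (by omega), hsplit, and_assoc]

theorem phase_setM_inter_agreeSet (hj : 0 < j) (hjd : j ≤ d) {n : ℕ} {N : ℤ}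
    (hN : N ∈ canonicalSet d j) (hnN : n ≤ N)
    (hgap : ∀ x ∈ canonicalSet d j, (n : ℤ) ≤ x → N ≤ x) (hNm : N ≤ m + j - (d + 1)) :
    phase (setM m d ∩ agreeSet m d j 0) ((listB m).take n) = setM m d ∩ agreeSet m d j N := by
  induction n generalizing N with
  | zero =>
    have hN0 : N = 0 := le_antisymm (hgap 0 (Or.inl rfl) le_rfl) hnN
    simp [phase, hN0]
  | succ n ih =>
    have hnm : n < m := by omega
    rw [phase_take_listB_succ _ hnm]
    by_cases hn : (n : ℤ) ∈ canonicalSet d j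
    · obtain ⟨p', hp'⟩ := exists_isNextCanonical hj hjd hn
      have hlt := hp'.lt
      have hN' : N = p' := by
        refine le_antisymm (hgap p' hp'.mem_next (by omega)) ?_
        by_contra! hcon
        have hsub := hp'.sub_lt
        have := hp'.eq_of_mem N hN (by omega) hcon
        omega
      rw [ih hn le_rfl (fun _ _ => id) (by omega), hN']
      exact stepSurv_setM_inter_agreeSet (p := ⟨n, hnm⟩) hp' hj hjd (by omega)
    · have hgap' : ∀ x ∈ canonicalSet d j, (n : ℤ) ≤ x → N ≤ x := fun x hx hnx =>
        hgap x hx (by have : (n : ℤ) ≠ x := fun h => hn (h ▸ hx); omega)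
      rw [ih hN (by omega) hgap' hNm]
      refine stepSurv_eq_self fun σ ⟨_, hσ⟩ hmem => hn ?_
      exact (hσ n (by omega) (by omega)).1 (coe_mem_periodicSupport (p := ⟨n, hnm⟩).2 hmem)

theorem forall_notMem_scriptSb_iff_mem_agreeSet {p : ℕ} (h : IsNextCanonical d j p p') (hj : 0 < j)
    (hjd : j ≤ d) (hp' : p' ≤ m + j - (d + 1)) (hM : σ ∈ setM m d) (hσ : σ ∈ agreeSet m d j 0) :
    (∀ i : Fin m, i.val ≤ p → σ ∉ scriptSb m d i) ↔ σ ∈ agreeSet m d j p' := by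
  have hlt := h.lt
  have hinv : ∀ v ∈ (listB m).take (p + 1), ∀ τ : Finset (Fin m ⊕ Fin m),
      insert v τ ∈ agreeSet m d j 0 ↔ τ ∈ agreeSet m d j 0 := by
    intro v hv τ
    obtain ⟨i, hi, rfl⟩ := List.mem_take_iff_getElem.1 hv
    simp only [listB, List.getElem_map, List.getElem_finRange]
    exact insert_inr_mem_agreeSet_iff (by simp) (by simp; omega)
  have hgap : ∀ x ∈ canonicalSet d j, ((p + 1 : ℕ) : ℤ) ≤ x → p' ≤ x := by
    intro x hx hpx
    by_contra! hcon
    have hsub := h.sub_lt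
    have := h.eq_of_mem x hx (by omega) hcon
    omega
  calc (∀ i : Fin m, i.val ≤ p → σ ∉ scriptSb m d i)
      ↔ σ ∈ phase (setM m d) ((listB m).take (p + 1)) := by
        simp [mem_phase_take_listB_iff (show p + 1 ≤ m by omega), hM]
    _ ↔ σ ∈ phase (setM m d ∩ agreeSet m d j 0) ((listB m).take (p + 1)) := by
        rw [phase_inter hinv, Set.mem_inter_iff, and_iff_left hσ]
    _ ↔ σ ∈ agreeSet m d j p' := by
        rw [phase_setM_inter_agreeSet hj hjd h.mem_next (by omega) hgap hp', Set.mem_inter_iff,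
          and_iff_right hM]

end Canonical

/-! ### Property `P_l` -/

section PropP

variable {m d l j : ℕ} {σ : Finset (Fin m ⊕ Fin m)}

theorem mem_agreeSet_zero (hj : 0 < j) (hjd : j ≤ d) (hdm : d < m)
    (hk : hasB m σ (m + j - (d + 1)))
    (hmax : ∀ i : Fin m, Sum.inr i ∈ σ → i.val ≤ m + j - (d + 1)) :
    σ ∈ agreeSet m d j 0 := by
  have hzero : IsNextCanonical d j 0 (0 + j) := isNextCanonical_add hj hjd rfl
  intro z hz hz0
  obtain ⟨n, hn⟩ : ∃ n : ℕ, z + m = n := Int.eq_ofNat_of_zero_le (by omega)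
  have hzn : z ∈ periodicSupport σ ↔ hasB m σ n := by
    rw [hasB_iff_mem_periodicSupport (by omega), ← hn]
    exact mem_periodicSupport_congr (by simp)
  rcases hz.eq_or_lt with rfl | hlt
  · rw [hzn, show n = m + j - (d + 1) by omega]
    exact iff_of_true hk (by simpa using hzero.sub_mem)
  · rw [hzn]
    refine iff_of_false ?_ fun hzC => ?_
    · rintro ⟨i, rfl, hi⟩
      have := hmax i hi
      omega
    · have := hzero.eq_of_mem z hzC (by omega) (by omega)
      omega

theorem natCast_mem_canonicalSet_iff (hjd : j ≤ d) {n : ℕ} :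
    (n : ℤ) ∈ canonicalSet d j ↔ ∃ r : ℕ, n = r * (d + 1) ∨ n = j + r * (d + 1) := by
  constructor
  · rintro (h | h)
    · obtain ⟨r, hr⟩ := Int.modEq_zero_iff_dvd.1 h
      have hr0 : 0 ≤ r := by nlinarith
      lift r to ℕ using hr0
      exact ⟨r, Or.inl (by zify; linarith)⟩
    · obtain ⟨r, hr⟩ := h.symm.dvd
      have hr0 : 0 ≤ r := by by_contra! hneg; nlinarith
      lift r to ℕ using hr0
      exact ⟨r, Or.inr (by zify; linarith)⟩
  · rintro ⟨r, rfl | rfl⟩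
    · exact Or.inl (Int.modEq_zero_iff_dvd.2 (by simp))
    · exact Or.inr (by simp)

theorem propP.mem_agreeSet (hP : propP m d (l + 1) j σ) (hm : (l + 1) * (d + 1) ≤ m) :
    σ ∈ agreeSet m d j (j + l * (d + 1) + 1) := by
  obtain ⟨-, -, hj, hjd, hhas, honly, hk, hmax, -⟩ := hP
  rw [Nat.add_sub_cancel] at honly
  have hdm : d < m := by nlinarith
  have hlast : j + l * (d + 1) < m := by linarith
  intro z hz hzN
  rcases lt_or_ge z 0 with hz0 | hz0
  · exact mem_agreeSet_zero hj hjd hdm hk hmax z hz hz0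
  lift z to ℕ using hz0
  have hzle : z ≤ j + l * (d + 1) := by exact_mod_cast Int.lt_add_one_iff.1 hzN
  rw [← hasB_iff_mem_periodicSupport (by omega), natCast_mem_canonicalSet_iff hjd]
  constructor
  · rintro ⟨i, rfl, hi⟩
    obtain ⟨r, -, -, hr⟩ := honly i hi hzle
    exact ⟨r - 1, hr⟩
  · rintro ⟨r, hr⟩
    have hrl : r < l + 1 := by
      by_contra! hlr
      have := Nat.mul_le_mul_right (d + 1) hlr
      rw [add_one_mul] at this
      omega
    obtain ⟨hi, hj⟩ := hhas (r + 1) (by omega) (by omega)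
    rcases hr with rfl | rfl
    exacts [hi, hj]

end PropP

/-- 0-based indices: write `m = t(d+1) + a` with `t ≥ 1`, `0 ≤ a ≤ d`, and let
`1 ≤ l < t`.  Let `σ ∈ M` satisfy property `P_l` (with parameter `j1`, 0-based subscripts
`i_r = (r-1)(d+1)`, `j_r = j1 + (r-1)(d+1)`, so `i_{l+1} = l(d+1)`).  Then `σ ∉ 𝒮_{b_i}` for
all `i ≤ l(d+1)` iff: (1) `b_{i_{l+1}} ∈ σ`; (2) `σ \ {b_{i_{l+1}}} ∉ M`; and (3) no
subscript `s ≠ i_{l+1}` of `σ` satisfies `j_l < s < j_{l+1}`. -/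
theorem stmt11 (m d t a l j1 : ℕ) (hd : 1 ≤ d) (hdm : d ≤ m)
    (ht : 1 ≤ t) (ha : a ≤ d) (hm : m = t * (d + 1) + a)
    (hl : 1 ≤ l) (hlt : l < t)
    (σ : Finset (Fin m ⊕ Fin m)) (hP : propP m d l j1 σ) :
    (∀ i : Fin m, i.val ≤ l * (d + 1) → σ ∉ scriptSb m d i) ↔
      (hasB m σ (l * (d + 1)) ∧
       (∀ j : Fin m, j.val = l * (d + 1) → σ.erase (Sum.inr j) ∉ setM m d) ∧
       (∀ s : Fin m, Sum.inr s ∈ σ → s.val ≠ l * (d + 1) →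
          ¬ (j1 + (l - 1) * (d + 1) < s.val ∧ s.val < j1 + l * (d + 1)))) := by
  obtain ⟨l, rfl⟩ := Nat.exists_eq_add_of_le' hl
  have hlm : (l + 1) * (d + 1) + (d + 1) ≤ m := by nlinarith
  have hagree := hP.mem_agreeSet (by omega)
  obtain ⟨hM, -, hj, hjd, -⟩ := hP
  have hnext : IsNextCanonical d j1 ((l + 1) * (d + 1) : ℕ) (j1 + (l + 1) * (d + 1) : ℕ) := by
    rw [Nat.cast_add, add_comm (j1 : ℤ)]
    exact isNextCanonical_add hj hjd (Int.modEq_zero_iff_dvd.2 (by simp))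
  have hbound : ((j1 + (l + 1) * (d + 1) : ℕ) : ℤ) ≤ m + j1 - (d + 1) := by omega
  have hagree_zero := agreeSet_anti (by positivity) hagree
  rw [Nat.add_sub_cancel,
    forall_notMem_scriptSb_iff_mem_agreeSet hnext hj hjd hbound hM hagree_zero]
  exact mem_agreeSet_next_iff_hasB hnext hj hjd (by ring) hbound hM (by exact_mod_cast hagree)
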